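/- Let p be a pmf on 𝒳ⁿ with p(xⁿ) > 0 for all xⁿ, let d: 𝒳ⁿ×𝒳̂ⁿ→[0,∞) be a distortion function, and let D > 0 be such that some conditional pmf r satisfies Σ_{xⁿ,x̂ⁿ} p(xⁿ)r(x̂ⁿ|xⁿ)d(xⁿ,x̂ⁿ) < D. Then Rₙ(D) equals the maximum, over λ ≥ 0 and γ: 𝒳ⁿ→(0,∞) for which there exists a reverse causal conditioning pmf p′(xⁿ||x̂ⁿ) = ∏_{i=1}^n p′_i(x_i|x^{i−1},x̂^i) satisfying p(xⁿ)·γ(xⁿ)·2^{−λ d(xⁿ,x̂ⁿ)} ≤ p′(xⁿ||x̂ⁿ) for all xⁿ, x̂ⁿ, of the value (1/n)·( −λD + Σ_{xⁿ} p(xⁿ) log₂ γ(xⁿ) ). -/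

import Mathlib

open scoped BigOperators
open Filter

noncomputable section

namespace FFRD

variable {X Y : Type} [Fintype X] [DecidableEq X] [Fintype Y] [DecidableEq Y] {n : ℕ}

/-- `p` is a probability mass function on a finite type. -/
def IsPMF {α : Type} [Fintype α] (p : α → ℝ) : Prop :=
  (∀ a, 0 ≤ p a) ∧ ∑ a, p a = 1

/-- `r` is a conditional pmf on `Fin n → Y` given `Fin n → X`. -/
def IsCondPMF (r : (Fin n → X) → (Fin n → Y) → ℝ) : Prop :=
  (∀ x y, 0 ≤ r x y) ∧ ∀ x, ∑ y, r x y = 1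

/-- The causal conditioning pmf `q_r(ŷⁿ‖x^{n-1})` induced by the joint pmf `p(x)·r(y|x)`:
the product over `i` of the conditional probabilities `P(y_i | y^{i-1}, x^{i-1})`. -/
def causalCond (p : (Fin n → X) → ℝ) (r : (Fin n → X) → (Fin n → Y) → ℝ)
    (x : Fin n → X) (y : Fin n → Y) : ℝ :=
  ∏ i : Fin n,
    ((∑ x' : Fin n → X, ∑ y' : Fin n → Y,
        if (∀ j, j < i → x' j = x j) ∧ (∀ j, j ≤ i → y' j = y j)
        then p x' * r x' y' else 0) /
      (∑ x' : Fin n → X, ∑ y' : Fin n → Y,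
        if (∀ j, j < i → x' j = x j) ∧ (∀ j, j < i → y' j = y j)
        then p x' * r x' y' else 0))

/-- Directed information `I(X̂ⁿ → Xⁿ)` computed from source pmf `p` and conditional pmf `r`. -/
def directedInfo (p : (Fin n → X) → ℝ) (r : (Fin n → X) → (Fin n → Y) → ℝ) : ℝ :=
  ∑ x, ∑ y, p x * r x y * Real.logb 2 (r x y / causalCond p r x y)

/-- The `n`-th order rate distortion function with feed-forward. -/
def Rn (n : ℕ) (p : (Fin n → X) → ℝ) (d : (Fin n → X) → (Fin n → Y) → ℝ) (D : ℝ) : ℝ :=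
  (1 / (n : ℝ)) *
    sInf {v | ∃ r : (Fin n → X) → (Fin n → Y) → ℝ, IsCondPMF r ∧
      (∑ x, ∑ y, p x * r x y * d x y) ≤ D ∧ v = directedInfo p r}

/-- Left shift on sequences. -/
def shift (X : Type) : (ℕ → X) → (ℕ → X) := fun ω k => ω (k + 1)

/-- The law of the first `n` coordinates under `μ`. -/
def lawFin [MeasurableSpace X] (μ : MeasureTheory.Measure (ℕ → X)) (n : ℕ)
    (x : Fin n → X) : ℝ :=
  (μ {ω | ∀ i : Fin n, ω (i : ℕ) = x i}).toReal

/-- Per-letter distortion extended to blocks of length `L`. -/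
def dBlock (d0 : X → Y → ℝ) (L : ℕ) (x : Fin L → X) (y : Fin L → Y) : ℝ :=
  (1 / (L : ℝ)) * ∑ i, d0 (x i) (y i)

end FFRD

namespace FFRD

/-- A reverse causal conditioning family: `f i x y` is the pmf `p′_i(· | x^{i−1}, x̂^i)` on `X`,
depending on `x` only through coordinates `j < i` and on `y` only through coordinates `j ≤ i`.
The associated reverse causal conditioning pmf is `p′(xⁿ‖x̂ⁿ) = ∏ i, f i x y (x i)`. -/
def IsRevCausalFamily {X Y : Type} [Fintype X] [Fintype Y] {n : ℕ}
    (f : Fin n → (Fin n → X) → (Fin n → Y) → X → ℝ) : Prop :=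
  (∀ i x y, (∀ a, 0 ≤ f i x y a) ∧ ∑ a, f i x y a = 1) ∧
  (∀ i x x' y y', (∀ j, j < i → x j = x' j) → (∀ j, j ≤ i → y j = y' j) →
    f i x y = f i x' y')

end FFRD

/-!
By Gibbs' inequality, the directed information of `r` is the maximum, over reverse causal
conditioning pmfs `p′`, of `E[log₂ (p′(Xⁿ‖X̂ⁿ) / p(Xⁿ))]`: the gap is a relative entropy between
`p(x) r(y|x)` and `q_r(y‖x) p′(x‖y)`, and it vanishes at `p′_i = P(x_i | x^{i-1}, x̂^i)`. Adding a
multiplier `λ ≥ 0` for the distortion constraint, `n Rₙ(D)` becomes the minimum over `r` of the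
supremum over `(p′, λ)` of a Lagrangian which is affine in `r` and concave in `(p′, λ)`. Sion's
minimax theorem exchanges the two. A strictly feasible `r₀` with positive entries bounds `λ` from
above and `p′` away from zero on the superlevel sets of the Lagrangian, so the maximum is attained.
For fixed `(p′, λ)` the minimum over `r` is attained by a deterministic `r`, and its value is the
dual objective at `log₂ γ(x) = min_y (log₂ (p′(x‖y) / p(x)) + λ d(x, y))`.
-/

namespace FFRD

section Preliminaries

theorem sum_prod_le_one_of_dependsOn {Z : Type*} [Fintype Z] {n : ℕ}
    (g : Fin n → (Fin n → Z) → ℝ) (hg : ∀ i z, 0 ≤ g i z)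
    (hdep : ∀ i, DependsOn (g i) (Set.Iic i))
    (hsum : ∀ i z, ∑ a, g i (Function.update z i a) ≤ 1) :
    ∑ z, ∏ i, g i z ≤ 1 := by
  induction n with
  | zero => simp
  | succ n ih =>
    rcases isEmpty_or_nonempty Z with hZ | ⟨⟨a₀⟩⟩
    · simp
    let z₀ : Fin (n + 1) → Z := fun _ ↦ a₀
    have head_eq (a : Z) (z : Fin n → Z) :
        g 0 (Fin.cons a z) = g 0 (Function.update z₀ 0 a) :=
      hdep 0 fun j hj ↦ by obtain rfl : j = 0 := Fin.le_zero_iff.1 hj; simp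
    have tail_le (a : Z) : ∑ z : Fin n → Z, ∏ i : Fin n, g i.succ (Fin.cons a z) ≤ 1 := by
      refine ih (fun i z ↦ g i.succ (Fin.cons a z)) (fun i z ↦ hg _ _) (fun i z z' h ↦ ?_)
        fun i z ↦ ?_
      · refine hdep _ fun j hj ↦ ?_
        induction j using Fin.cases with
        | zero => simp
        | succ j => simpa using h j (Fin.succ_le_succ_iff.1 hj)
      · simpa only [Fin.cons_update] using hsum i.succ (Fin.cons a z)
    calc ∑ z, ∏ i, g i z
        = ∑ a, ∑ z : Fin n → Z, ∏ i, g i (Fin.cons a z : Fin (n + 1) → Z) := by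
          rw [← (Fin.consEquiv fun _ ↦ Z).sum_comp, Fintype.sum_prod_type]
          rfl
      _ = ∑ a, g 0 (Function.update z₀ 0 a) *
            ∑ z : Fin n → Z, ∏ i : Fin n, g i.succ (Fin.cons a z) := by
          simp only [Fin.prod_univ_succ, head_eq, Finset.mul_sum]
      _ ≤ ∑ a, g 0 (Function.update z₀ 0 a) :=
          Finset.sum_le_sum fun a _ ↦ mul_le_of_le_one_right (hg _ _) (tail_le a)
      _ ≤ 1 := hsum 0 z₀

theorem sub_le_mul_log_div {a b : ℝ} (ha : 0 ≤ a) (hb : 0 ≤ b) (hab : b = 0 → a = 0) :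
    a - b ≤ a * Real.log (a / b) := by
  rcases hb.eq_or_lt with rfl | hb
  · simp [hab rfl]
  calc a - b = b * (a / b - 1) := by field_simp
    _ ≤ b * (a / b * Real.log (a / b)) :=
        mul_le_mul_of_nonneg_left (Real.self_sub_one_le_mul_log (by positivity)) hb.le
    _ = a * Real.log (a / b) := by field_simp

theorem concaveOn_logb_prod {ι : Type*} [Fintype ι] {b : ℝ} (hb : 1 < b) :
    ConcaveOn ℝ {v : ι → ℝ | ∀ i, 0 < v i} fun v ↦ Real.logb b (∏ i, v i) := by
  have hconv : Convex ℝ {v : ι → ℝ | ∀ i, 0 < v i} := by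
    simpa [Set.pi] using convex_pi (s := Set.univ) fun (i : ι) _ ↦ convex_Ioi (𝕜 := ℝ) (0 : ℝ)
  have hlog : ConcaveOn ℝ (Set.Ioi 0) (Real.logb b) := by
    have hscaled := strictConcaveOn_log_Ioi.concaveOn.smul (inv_nonneg.2 (Real.log_pos hb).le)
    exact hscaled.congr fun v _ ↦ (div_eq_inv_mul _ _).symm
  refine ⟨hconv, fun v hv w hw s t hs ht hst ↦ ?_⟩
  have hcombo := hconv hv hw hs ht hst
  dsimp only
  rw [Real.logb_prod _ _ fun i _ ↦ (hv i).ne', Real.logb_prod _ _ fun i _ ↦ (hw i).ne',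
    Real.logb_prod _ _ fun i _ ↦ (hcombo i).ne', Finset.smul_sum, Finset.smul_sum,
    ← Finset.sum_add_distrib]
  exact Finset.sum_le_sum fun i _ ↦ hlog.2 (hv i) (hw i) hs ht hst

theorem mul_mul_rpow_neg_le_iff {q γ c P : ℝ} (hq : 0 < q) (hγ : 0 < γ) (hP : 0 < P) :
    q * γ * 2 ^ (-c) ≤ P ↔ Real.logb 2 γ ≤ Real.logb 2 P - Real.logb 2 q + c := by
  rw [← Real.logb_le_logb one_lt_two (by positivity) hP, Real.logb_mul (by positivity)
    (by positivity), Real.logb_mul hq.ne' hγ.ne', Real.logb_rpow two_pos (by norm_num)]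
  constructor <;> intro h <;> linarith

theorem exists_convexCombo_lt {a c : ℝ} (h : a < c) (b : ℝ) :
    ∃ s ∈ Set.Ioo (0 : ℝ) 1, (1 - s) * a + s * b < c := by
  have hcont : Continuous fun s : ℝ ↦ (1 - s) * a + s * b := by fun_prop
  have hlim : ∀ᶠ s in nhdsWithin (0 : ℝ) (Set.Ioi 0), (1 - s) * a + s * b < c :=
    nhdsWithin_le_nhds <| hcont.continuousAt.eventually_lt_const (by simpa using h)
  obtain ⟨s, hs, hs01⟩ := (hlim.and (Ioo_mem_nhdsGT one_pos)).exists
  exact ⟨s, hs01, hs⟩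

theorem exists_forall_lt_of_forall_exists_lt {E F : Type*}
    [TopologicalSpace E] [AddCommGroup E] [Module ℝ E] [IsTopologicalAddGroup E]
    [ContinuousSMul ℝ E] [TopologicalSpace F] [AddCommGroup F] [Module ℝ F]
    [IsTopologicalAddGroup F] [ContinuousSMul ℝ F] {K : Set E} {S : Set F} {Φ : E → F → ℝ}
    (hKne : K.Nonempty) (hKconv : Convex ℝ K) (hK : IsCompact K) (hS : Convex ℝ S)
    (hlsc : ∀ s ∈ S, LowerSemicontinuousOn (Φ · s) K)
    (hqconv : ∀ s ∈ S, QuasiconvexOn ℝ K (Φ · s))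
    (husc : ∀ r ∈ K, UpperSemicontinuousOn (Φ r) S)
    (hqconc : ∀ r ∈ K, QuasiconcaveOn ℝ S (Φ r))
    {t : ℝ} (h : ∀ r ∈ K, ∃ s ∈ S, t < Φ r s) :
    ∃ s ∈ S, ∀ r ∈ K, t < Φ r s := by
  choose! s hsS hs using h
  obtain ⟨c, hcK, hc⟩ := hK.elim_nhdsWithin_subcover (fun r ↦ {r' | t < Φ r' (s r)})
    fun r hr ↦ hlsc _ (hsS r hr) r hr t (hs r hr)
  refine Sion.exists_lt_iInf_of_lt_iInf_of_finite hKne hK hlsc hqconv hS husc hqconc hKconv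
    (s := s '' c) (c.finite_toSet.image s) (Set.image_subset_iff.2 fun r hr ↦ hsS r (hcK r hr))
    fun r hr ↦ ?_
  obtain ⟨r', hr'c, hr'⟩ := Set.mem_iUnion₂.1 (hc hr)
  exact ⟨s r', Set.mem_image_of_mem s hr'c, hr'⟩

theorem exists_forall_le_of_forall_lt {ι F : Type*} [TopologicalSpace F] {C : Set F}
    (hC : IsCompact C) {Φ : ι → F → ℝ} (hΦ : ∀ i, UpperSemicontinuousOn (Φ i) C) {R : ℝ}
    (h : ∀ t < R, ∃ s ∈ C, ∀ i, t ≤ Φ i s) :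
    ∃ s ∈ C, ∀ i, R ≤ Φ i s := by
  have : Nonempty F := (h (R - 1) (sub_one_lt R)).nonempty
  choose! s hsC hs using h
  have hmap : map s (nhdsWithin R (Set.Iio R)) ≤ 𝓟 C :=
    tendsto_principal.2 (eventually_mem_nhdsWithin.mono hsC)
  obtain ⟨a, haC, ha⟩ := hC hmap
  refine ⟨a, haC, fun i ↦ le_of_not_gt fun hlt ↦ ?_⟩
  obtain ⟨t, hat, htR⟩ := exists_between hlt
  have near : ∀ᶠ z in nhds a ⊓ map s (nhdsWithin R (Set.Iio R)), Φ i z < t :=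
    (hΦ i a haC t hat).filter_mono (inf_le_inf_left _ hmap)
  have far : ∀ᶠ z in map s (nhdsWithin R (Set.Iio R)), t ≤ Φ i z :=
    eventually_map.2 <| (eventually_mem_set.2 (Ioo_mem_nhdsLT htR)).mono fun u hu ↦
      hu.1.le.trans (hs u hu.2 i)
  have : (nhds a ⊓ map s (nhdsWithin R (Set.Iio R))).NeBot := ha
  obtain ⟨z, hzt, htz⟩ := (near.and (far.filter_mono inf_le_right)).exists
  exact hzt.not_ge htz

end Preliminaries

section PrefixMass

variable {X Y : Type} [Fintype X] [DecidableEq X] [Fintype Y] [DecidableEq Y] {n : ℕ}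

/-- The probability `P(X^k = x^k, X̂^l = y^l)` under the joint pmf `p(x) r(y|x)`, where `x^k` is the
prefix consisting of the coordinates with index `< k`. -/
def prefixMass (p : (Fin n → X) → ℝ) (r : (Fin n → X) → (Fin n → Y) → ℝ) (k l : ℕ)
    (x : Fin n → X) (y : Fin n → Y) : ℝ :=
  ∑ x' : Fin n → X, ∑ y' : Fin n → Y,
    if (∀ j : Fin n, j.val < k → x' j = x j) ∧ (∀ j : Fin n, j.val < l → y' j = y j)
    then p x' * r x' y' else 0

variable {p : (Fin n → X) → ℝ} {r : (Fin n → X) → (Fin n → Y) → ℝ}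

theorem causalCond_eq_prod_prefixMass (p : (Fin n → X) → ℝ)
    (r : (Fin n → X) → (Fin n → Y) → ℝ) (x : Fin n → X) (y : Fin n → Y) :
    causalCond p r x y =
      ∏ i : Fin n, prefixMass p r i (i + 1) x y / prefixMass p r i i x y := by
  simp only [causalCond, prefixMass, Fin.lt_def, Fin.le_def, Nat.lt_succ_iff]

theorem prefixMass_nonneg (hp : ∀ x, 0 ≤ p x) (hr : ∀ x y, 0 ≤ r x y) (k l : ℕ)
    (x : Fin n → X) (y : Fin n → Y) : 0 ≤ prefixMass p r k l x y :=
  Finset.sum_nonneg fun _ _ ↦ Finset.sum_nonneg fun _ _ ↦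
    ite_nonneg (mul_nonneg (hp _) (hr _ _)) le_rfl

theorem mul_le_prefixMass (hp : ∀ x, 0 ≤ p x) (hr : ∀ x y, 0 ≤ r x y) (k l : ℕ)
    (x : Fin n → X) (y : Fin n → Y) : p x * r x y ≤ prefixMass p r k l x y := by
  have term_nonneg (x' y') : 0 ≤ if (∀ j : Fin n, j.val < k → x' j = x j) ∧
      (∀ j : Fin n, j.val < l → y' j = y j) then p x' * r x' y' else 0 :=
    ite_nonneg (mul_nonneg (hp _) (hr _ _)) le_rfl
  calc p x * r x y = _ := (if_pos ⟨fun _ _ ↦ rfl, fun _ _ ↦ rfl⟩).symm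
    _ ≤ _ := Finset.single_le_sum (fun y' _ ↦ term_nonneg x y') (Finset.mem_univ y)
    _ ≤ _ := Finset.single_le_sum (fun x' _ ↦ Finset.sum_nonneg fun y' _ ↦ term_nonneg x' y')
      (Finset.mem_univ x)

theorem prefixMass_pos (hp : ∀ x, 0 ≤ p x) (hr : ∀ x y, 0 ≤ r x y) {x : Fin n → X}
    {y : Fin n → Y} (h : 0 < p x * r x y) (k l : ℕ) : 0 < prefixMass p r k l x y :=
  h.trans_le (mul_le_prefixMass hp hr k l x y)

theorem prefixMass_congr (p : (Fin n → X) → ℝ) (r : (Fin n → X) → (Fin n → Y) → ℝ) {k l : ℕ}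
    {x x' : Fin n → X} {y y' : Fin n → Y} (hx : ∀ j : Fin n, j.val < k → x j = x' j)
    (hy : ∀ j : Fin n, j.val < l → y j = y' j) :
    prefixMass p r k l x y = prefixMass p r k l x' y' := by
  unfold prefixMass
  congr! 7 with x₀ _ y₀ _ j hj j hj
  · exact hx j hj
  · exact hy j hj

theorem forall_lt_succ_eq_update_iff {Z : Type*} (i : Fin n) (z z' : Fin n → Z) (b : Z) :
    (∀ j : Fin n, j.val < i.val + 1 → z' j = Function.update z i b j) ↔
      (∀ j : Fin n, j.val < i.val → z' j = z j) ∧ z' i = b := by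
  refine ⟨fun h ↦ ⟨fun j hj ↦ ?_, by simpa using h i⟩, fun ⟨hlt, hi⟩ j hj ↦ ?_⟩
  · simpa [Function.update_of_ne (Fin.ne_of_lt hj)] using h j (by omega)
  · rcases eq_or_ne j i with rfl | hji
    · simpa using hi
    · simpa [hji] using hlt j (by omega)

theorem sum_prefixMass_update_right (p : (Fin n → X) → ℝ) (r : (Fin n → X) → (Fin n → Y) → ℝ)
    (i : Fin n) (k : ℕ) (x : Fin n → X) (y : Fin n → Y) :
    ∑ b, prefixMass p r k (i + 1) x (Function.update y i b) = prefixMass p r k i x y := by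
  unfold prefixMass
  rw [Finset.sum_comm]
  refine Finset.sum_congr rfl fun x' _ ↦ ?_
  rw [Finset.sum_comm]
  refine Finset.sum_congr rfl fun y' _ ↦ ?_
  simp only [forall_lt_succ_eq_update_iff, ← and_assoc, ite_and (_ ∧ _)]
  split_ifs <;> simp

theorem sum_prefixMass_update_left (p : (Fin n → X) → ℝ) (r : (Fin n → X) → (Fin n → Y) → ℝ)
    (i : Fin n) (l : ℕ) (x : Fin n → X) (y : Fin n → Y) :
    ∑ a, prefixMass p r (i + 1) l (Function.update x i a) y = prefixMass p r i l x y := by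
  unfold prefixMass
  rw [Finset.sum_comm]
  refine Finset.sum_congr rfl fun x' _ ↦ ?_
  rw [Finset.sum_comm]
  refine Finset.sum_congr rfl fun y' _ ↦ ?_
  simp only [forall_lt_succ_eq_update_iff, and_right_comm (b := x' i = _), ite_and (_ ∧ _)]
  split_ifs <;> simp

theorem prefixMass_zero_zero (hp : IsPMF p) (hr : IsCondPMF r) (x : Fin n → X) (y : Fin n → Y) :
    prefixMass p r 0 0 x y = 1 := by
  simp [prefixMass, ← Finset.mul_sum, hr.2, hp.2]

theorem prefixMass_self_self (p : (Fin n → X) → ℝ) (r : (Fin n → X) → (Fin n → Y) → ℝ)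
    (x : Fin n → X) (y : Fin n → Y) : prefixMass p r n n x y = p x * r x y := by
  simp [prefixMass, ← funext_iff, ite_and]

theorem causalCond_nonneg (hp : ∀ x, 0 ≤ p x) (hr : ∀ x y, 0 ≤ r x y) (x : Fin n → X)
    (y : Fin n → Y) : 0 ≤ causalCond p r x y := by
  rw [causalCond_eq_prod_prefixMass]
  exact Finset.prod_nonneg fun i _ ↦
    div_nonneg (prefixMass_nonneg hp hr _ _ _ _) (prefixMass_nonneg hp hr _ _ _ _)

theorem causalCond_pos (hp : ∀ x, 0 ≤ p x) (hr : ∀ x y, 0 ≤ r x y) {x : Fin n → X}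
    {y : Fin n → Y} (h : 0 < p x * r x y) : 0 < causalCond p r x y := by
  rw [causalCond_eq_prod_prefixMass]
  exact Finset.prod_pos fun i _ ↦
    div_pos (prefixMass_pos hp hr h _ _) (prefixMass_pos hp hr h _ _)

end PrefixMass

section RevCausal

variable {X Y : Type} {n : ℕ}

/-- The reverse causal conditioning pmf `p′(xⁿ‖x̂ⁿ) = ∏ i, p′_i(x_i | x^{i-1}, x̂^i)` with factors
`p′_i(a | x^{i-1}, x̂^i) = f i x y a`. -/
def revCausalPMF (f : Fin n → (Fin n → X) → (Fin n → Y) → X → ℝ) (x : Fin n → X)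
    (y : Fin n → Y) : ℝ :=
  ∏ i, f i x y (x i)

variable [Fintype X] [Fintype Y]

namespace IsRevCausalFamily

variable {f : Fin n → (Fin n → X) → (Fin n → Y) → X → ℝ}

theorem apply_le_one (hf : IsRevCausalFamily f) (i : Fin n) (x : Fin n → X) (y : Fin n → Y)
    (a : X) : f i x y a ≤ 1 :=
  (hf.1 i x y).2 ▸ Finset.single_le_sum (fun b _ ↦ (hf.1 i x y).1 b) (Finset.mem_univ a)

theorem revCausalPMF_nonneg (hf : IsRevCausalFamily f) (x : Fin n → X) (y : Fin n → Y) :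
    0 ≤ revCausalPMF f x y :=
  Finset.prod_nonneg fun i _ ↦ (hf.1 i x y).1 _

theorem revCausalPMF_le_one (hf : IsRevCausalFamily f) (x : Fin n → X) (y : Fin n → Y) :
    revCausalPMF f x y ≤ 1 :=
  Finset.prod_le_one (fun i _ ↦ (hf.1 i x y).1 _) fun i _ ↦ hf.apply_le_one i x y _

end IsRevCausalFamily

variable [DecidableEq X] [DecidableEq Y]
  {p : (Fin n → X) → ℝ} {r : (Fin n → X) → (Fin n → Y) → ℝ}

/-- The reverse causal family `P(x_i | x^{i-1}, x̂^i)` of the joint pmf `p(x) r(y|x)`, taken to be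
uniform where the conditioning event has probability zero. -/
def revCausalCond (p : (Fin n → X) → ℝ) (r : (Fin n → X) → (Fin n → Y) → ℝ) (i : Fin n)
    (x : Fin n → X) (y : Fin n → Y) (a : X) : ℝ :=
  if prefixMass p r i (i + 1) x y = 0 then (Fintype.card X : ℝ)⁻¹
  else prefixMass p r (i + 1) (i + 1) (Function.update x i a) y / prefixMass p r i (i + 1) x y

theorem isRevCausalFamily_revCausalCond (hp : ∀ x, 0 ≤ p x) (hr : ∀ x y, 0 ≤ r x y) :
    IsRevCausalFamily (revCausalCond p r) := by
  refine ⟨fun i x y ↦ ⟨fun a ↦ ?_, ?_⟩, fun i x x' y y' hx hy ↦ funext fun a ↦ ?_⟩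
  · exact ite_nonneg (by positivity)
      (div_nonneg (prefixMass_nonneg hp hr _ _ _ _) (prefixMass_nonneg hp hr _ _ _ _))
  · have : Nonempty X := ⟨x i⟩
    by_cases h : prefixMass p r i (i + 1) x y = 0
    · simp [revCausalCond, h]
    · simp only [revCausalCond, if_neg h]
      rw [← Finset.sum_div, sum_prefixMass_update_left, div_self h]
  · have hy' (j : Fin n) (hj : j.val < i.val + 1) : y j = y' j := hy j (Nat.lt_succ_iff.1 hj)
    have hx' : ∀ j : Fin n, j.val < i.val + 1 →
        Function.update x i a j = Function.update x' i a j := by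
      refine (forall_lt_succ_eq_update_iff i x' _ a).2 ⟨fun j hj ↦ ?_, by simp⟩
      rw [Function.update_of_ne (Fin.ne_of_lt hj), hx j hj]
    simp only [revCausalCond, prefixMass_congr p r hx hy', prefixMass_congr p r hx' hy']

theorem revCausalCond_self (hp : ∀ x, 0 ≤ p x) (hr : ∀ x y, 0 ≤ r x y) {x : Fin n → X}
    {y : Fin n → Y} (h : 0 < p x * r x y) (i : Fin n) :
    revCausalCond p r i x y (x i) =
      prefixMass p r (i + 1) (i + 1) x y / prefixMass p r i (i + 1) x y := by
  rw [revCausalCond, if_neg (prefixMass_pos hp hr h _ _).ne', Function.update_eq_self]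

theorem revCausalCond_self_pos (hp : ∀ x, 0 ≤ p x) (hr : ∀ x y, 0 ≤ r x y) {x : Fin n → X}
    {y : Fin n → Y} (h : 0 < p x * r x y) (i : Fin n) : 0 < revCausalCond p r i x y (x i) := by
  rw [revCausalCond_self hp hr h]
  exact div_pos (prefixMass_pos hp hr h _ _) (prefixMass_pos hp hr h _ _)

theorem causalCond_mul_revCausalPMF_revCausalCond (hp : IsPMF p) (hr : IsCondPMF r)
    {x : Fin n → X} {y : Fin n → Y} (h : 0 < p x * r x y) :
    causalCond p r x y * revCausalPMF (revCausalCond p r) x y = p x * r x y := by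
  have hne (k l : ℕ) : prefixMass p r k l x y ≠ 0 := (prefixMass_pos hp.1 hr.1 h k l).ne'
  have telescope : ∏ k ∈ Finset.range n,
      prefixMass p r (k + 1) (k + 1) x y / prefixMass p r k k x y = prefixMass p r n n x y :=
    Finset.prod_range_induction _ (fun k ↦ prefixMass p r k k x y)
      (prefixMass_zero_zero hp hr x y) n fun k _ ↦ (mul_div_cancel₀ _ (hne k k)).symm
  calc causalCond p r x y * revCausalPMF (revCausalCond p r) x y
      = ∏ i : Fin n, prefixMass p r (i + 1) (i + 1) x y / prefixMass p r i i x y := by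
        rw [causalCond_eq_prod_prefixMass, revCausalPMF, ← Finset.prod_mul_distrib]
        refine Finset.prod_congr rfl fun i _ ↦ ?_
        rw [revCausalCond_self hp.1 hr.1 h, mul_comm, div_mul_div_cancel₀ (hne _ _)]
    _ = p x * r x y := by
        rw [Fin.prod_univ_eq_prod_range
          (fun k ↦ prefixMass p r (k + 1) (k + 1) x y / prefixMass p r k k x y) n, telescope,
          prefixMass_self_self]

/-- The `i`-th factor of the product of the causal conditioning pmf induced by `r` and the reverse
causal conditioning pmf with factors `f`. -/
def causalFactor (p : (Fin n → X) → ℝ) (r : (Fin n → X) → (Fin n → Y) → ℝ)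
    (f : Fin n → (Fin n → X) → (Fin n → Y) → X → ℝ) (i : Fin n) (x : Fin n → X)
    (y : Fin n → Y) : ℝ :=
  prefixMass p r i (i + 1) x y / prefixMass p r i i x y * f i x y (x i)

variable {f : Fin n → (Fin n → X) → (Fin n → Y) → X → ℝ}

theorem causalCond_mul_revCausalPMF_eq_prod (x : Fin n → X) (y : Fin n → Y) :
    causalCond p r x y * revCausalPMF f x y = ∏ i, causalFactor p r f i x y := by
  rw [causalCond_eq_prod_prefixMass, revCausalPMF, ← Finset.prod_mul_distrib]
  rfl

theorem causalFactor_nonneg (hp : ∀ x, 0 ≤ p x) (hr : ∀ x y, 0 ≤ r x y)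
    (hf : IsRevCausalFamily f) (i : Fin n) (x : Fin n → X) (y : Fin n → Y) :
    0 ≤ causalFactor p r f i x y :=
  mul_nonneg (div_nonneg (prefixMass_nonneg hp hr _ _ _ _) (prefixMass_nonneg hp hr _ _ _ _))
    ((hf.1 _ _ _).1 _)

theorem causalFactor_congr (hf : IsRevCausalFamily f) {i : Fin n} {x x' : Fin n → X}
    {y y' : Fin n → Y} (hx : ∀ j ≤ i, x j = x' j) (hy : ∀ j ≤ i, y j = y' j) :
    causalFactor p r f i x y = causalFactor p r f i x' y' := by
  have hx_lt (j : Fin n) (hj : j < i) : x j = x' j := hx j hj.le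
  have hy_lt (j : Fin n) (hj : j < i) : y j = y' j := hy j hj.le
  have hy_lt_succ (j : Fin n) (hj : j.val < i.val + 1) : y j = y' j := hy j (Nat.lt_succ_iff.1 hj)
  rw [causalFactor, causalFactor, prefixMass_congr p r hx_lt hy_lt_succ,
    prefixMass_congr p r hx_lt hy_lt, hf.2 i x x' y y' hx_lt hy, hx i le_rfl]

theorem sum_causalFactor_update_le_one (hf : IsRevCausalFamily f) (i : Fin n) (x : Fin n → X)
    (y : Fin n → Y) :
    ∑ a, ∑ b, causalFactor p r f i (Function.update x i a) (Function.update y i b) ≤ 1 := by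
  have update_eq {Z : Type} (w : Fin n → Z) (c : Z) (j : Fin n) (hj : j < i) :
      Function.update w i c j = w j := Function.update_of_ne hj.ne _ _
  calc ∑ a, ∑ b, causalFactor p r f i (Function.update x i a) (Function.update y i b)
      = ∑ b, ∑ a, prefixMass p r i (i + 1) x (Function.update y i b) /
          prefixMass p r i i x y * f i x (Function.update y i b) a := by
        rw [Finset.sum_comm]
        refine Finset.sum_congr rfl fun b _ ↦ Finset.sum_congr rfl fun a _ ↦ ?_
        rw [causalFactor, Function.update_self,
          prefixMass_congr p r (update_eq x a) (fun j _ ↦ rfl),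
          prefixMass_congr p r (update_eq x a) (update_eq y b),
          hf.2 i _ x _ _ (update_eq x a) (fun j _ ↦ rfl)]
    _ = prefixMass p r i i x y / prefixMass p r i i x y := by
        simp only [← Finset.mul_sum, (hf.1 _ _ _).2, mul_one, ← Finset.sum_div,
          sum_prefixMass_update_right]
    _ ≤ 1 := div_self_le_one _

theorem sum_causalCond_mul_revCausalPMF_le_one (hp : ∀ x, 0 ≤ p x) (hr : ∀ x y, 0 ≤ r x y)
    (hf : IsRevCausalFamily f) :
    ∑ x, ∑ y, causalCond p r x y * revCausalPMF f x y ≤ 1 := by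
  calc ∑ x, ∑ y, causalCond p r x y * revCausalPMF f x y
      = ∑ z : Fin n → X × Y, ∏ i, causalFactor p r f i (Prod.fst ∘ z) (Prod.snd ∘ z) := by
        simp only [causalCond_mul_revCausalPMF_eq_prod]
        rw [← Fintype.sum_prod_type',
          ← (Equiv.arrowProdEquivProdArrow (Fin n) (fun _ ↦ X) (fun _ ↦ Y)).sum_comp]
        rfl
    _ ≤ 1 := by
        refine sum_prod_le_one_of_dependsOn _ (fun i z ↦ causalFactor_nonneg hp hr hf _ _ _)
          (fun i z z' h ↦ ?_) fun i z ↦ ?_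
        · exact causalFactor_congr hf (fun j hj ↦ congrArg Prod.fst (h j hj))
            fun j hj ↦ congrArg Prod.snd (h j hj)
        · simp only [Function.comp_update, Fintype.sum_prod_type]
          exact sum_causalFactor_update_le_one hf i _ _

end RevCausal

section JointExp

variable {α β : Type*} [Fintype α] [Fintype β]

/-- The expectation of `w` under the joint pmf `p(x) r(y|x)`. -/
def jointExp (p : α → ℝ) (r w : α → β → ℝ) : ℝ :=
  ∑ x, ∑ y, p x * r x y * w x y

variable {p : α → ℝ} {r w w' : α → β → ℝ}

theorem jointExp_combo_left (p : α → ℝ) (r r' w : α → β → ℝ) (a b : ℝ) :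
    jointExp p (a • r + b • r') w = a * jointExp p r w + b * jointExp p r' w := by
  simp only [jointExp, Finset.mul_sum, ← Finset.sum_add_distrib, Pi.add_apply, Pi.smul_apply,
    smul_eq_mul]
  congr! 2
  ring

theorem jointExp_combo_right (p : α → ℝ) (r w w' : α → β → ℝ) (a b : ℝ) :
    jointExp p r (a • w + b • w') = a * jointExp p r w + b * jointExp p r w' := by
  simp only [jointExp, Finset.mul_sum, ← Finset.sum_add_distrib, Pi.add_apply, Pi.smul_apply,
    smul_eq_mul]
  congr! 2
  ring

theorem jointExp_mono (hp : ∀ x, 0 ≤ p x) (hr : ∀ x y, 0 ≤ r x y)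
    (h : ∀ x y, 0 < p x → w x y ≤ w' x y) : jointExp p r w ≤ jointExp p r w' := by
  refine Finset.sum_le_sum fun x _ ↦ Finset.sum_le_sum fun y _ ↦ ?_
  rcases (hp x).eq_or_lt with hx | hx
  · simp [← hx]
  · exact mul_le_mul_of_nonneg_left (h x y hx) (mul_nonneg hx.le (hr x y))

theorem apply_le_jointExp (hp : ∀ x, 0 ≤ p x) (hr : ∀ x y, 0 ≤ r x y)
    (hw : ∀ x y, 0 ≤ w x y) (x : α) (y : β) : p x * r x y * w x y ≤ jointExp p r w := by
  have term_nonneg (x y) : 0 ≤ p x * r x y * w x y :=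
    mul_nonneg (mul_nonneg (hp x) (hr x y)) (hw x y)
  calc p x * r x y * w x y ≤ ∑ y, p x * r x y * w x y :=
        Finset.single_le_sum (fun y _ ↦ term_nonneg x y) (Finset.mem_univ y)
    _ ≤ jointExp p r w := Finset.single_le_sum
        (f := fun x ↦ ∑ y, p x * r x y * w x y)
        (fun x _ ↦ Finset.sum_nonneg fun y _ ↦ term_nonneg x y) (Finset.mem_univ x)

theorem jointExp_const_right (hr : ∀ x, ∑ y, r x y = 1) (u : α → ℝ) :
    jointExp p r (fun x _ ↦ u x) = ∑ x, p x * u x := by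
  simp only [jointExp, ← Finset.sum_mul, ← Finset.mul_sum, hr, mul_one]

theorem continuous_jointExp (p : α → ℝ) (w : α → β → ℝ) :
    Continuous fun r : α → β → ℝ ↦ jointExp p r w := by
  unfold jointExp
  fun_prop

theorem jointExp_ite_eq [DecidableEq β] (p : α → ℝ) (g : α → β) (w : α → β → ℝ) :
    jointExp p (fun x y ↦ if y = g x then 1 else 0) w = ∑ x, p x * w x (g x) := by
  simp [jointExp]

end JointExp

section Info

variable {X Y : Type} [Fintype X] [Fintype Y] {n : ℕ}
  {p : (Fin n → X) → ℝ} {r : (Fin n → X) → (Fin n → Y) → ℝ}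
  {f : Fin n → (Fin n → X) → (Fin n → Y) → X → ℝ}

/-- The variational functional `E[log₂ (p′(Xⁿ‖X̂ⁿ) / p(Xⁿ))]` under the joint pmf `p(x) r(y|x)`,
where `p′` has factors `f`. Its maximum over `f` is the directed information. -/
def revInfo (p : (Fin n → X) → ℝ) (r : (Fin n → X) → (Fin n → Y) → ℝ)
    (f : Fin n → (Fin n → X) → (Fin n → Y) → X → ℝ) : ℝ :=
  jointExp p r fun x y ↦ Real.logb 2 (revCausalPMF f x y) - Real.logb 2 (p x)

variable [DecidableEq X] [DecidableEq Y]

theorem directedInfo_sub_revInfo (hp : ∀ x, 0 ≤ p x) (hr : ∀ x y, 0 ≤ r x y)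
    (hf : ∀ x y, 0 < p x * r x y → 0 < revCausalPMF f x y) :
    directedInfo p r - revInfo p r f =
      (∑ x, ∑ y, p x * r x y *
        Real.log (p x * r x y / (causalCond p r x y * revCausalPMF f x y))) / Real.log 2 := by
  simp only [directedInfo, revInfo, jointExp, ← Finset.sum_sub_distrib, Finset.sum_div]
  refine Finset.sum_congr rfl fun x _ ↦ Finset.sum_congr rfl fun y _ ↦ ?_
  rcases (mul_nonneg (hp x) (hr x y)).eq_or_lt with hxy | hxy
  · simp [← hxy]
  have hpx : p x ≠ 0 := left_ne_zero_of_mul hxy.ne'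
  have hrxy : r x y ≠ 0 := right_ne_zero_of_mul hxy.ne'
  have hq : causalCond p r x y ≠ 0 := (causalCond_pos hp hr hxy).ne'
  have hP : revCausalPMF f x y ≠ 0 := (hf x y hxy).ne'
  rw [Real.logb_div hrxy hq, Real.log_div hxy.ne' (mul_ne_zero hq hP), Real.log_mul hpx hrxy,
    Real.log_mul hq hP]
  simp only [Real.logb]
  ring

theorem revInfo_le_directedInfo (hp : IsPMF p) (hr : IsCondPMF r) (hf : IsRevCausalFamily f)
    (hpos : ∀ x y, 0 < p x * r x y → 0 < revCausalPMF f x y) :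
    revInfo p r f ≤ directedInfo p r := by
  have sum_joint : ∑ x, ∑ y, p x * r x y = 1 := by simp [← Finset.mul_sum, hr.2, hp.2]
  have gibbs (x y) : p x * r x y - causalCond p r x y * revCausalPMF f x y ≤ p x * r x y *
      Real.log (p x * r x y / (causalCond p r x y * revCausalPMF f x y)) := by
    refine sub_le_mul_log_div (mul_nonneg (hp.1 x) (hr.1 x y))
      (mul_nonneg (causalCond_nonneg hp.1 hr.1 x y) (hf.revCausalPMF_nonneg x y)) fun hzero ↦ ?_
    by_contra hne
    have hxy := (mul_nonneg (hp.1 x) (hr.1 x y)).lt_of_ne' hne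
    exact (mul_pos (causalCond_pos hp.1 hr.1 hxy) (hpos x y hxy)).ne' hzero
  rw [← sub_nonneg, directedInfo_sub_revInfo hp.1 hr.1 hpos]
  refine div_nonneg ?_ (Real.log_nonneg one_le_two)
  calc (0 : ℝ) ≤ 1 - ∑ x, ∑ y, causalCond p r x y * revCausalPMF f x y :=
        sub_nonneg.2 (sum_causalCond_mul_revCausalPMF_le_one hp.1 hr.1 hf)
    _ = ∑ x, ∑ y, (p x * r x y - causalCond p r x y * revCausalPMF f x y) := by
        simp only [Finset.sum_sub_distrib, sum_joint]
    _ ≤ _ := Finset.sum_le_sum fun x _ ↦ Finset.sum_le_sum fun y _ ↦ gibbs x y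

theorem revCausalPMF_revCausalCond_pos (hp : ∀ x, 0 ≤ p x) (hr : ∀ x y, 0 ≤ r x y)
    {x : Fin n → X} {y : Fin n → Y} (h : 0 < p x * r x y) :
    0 < revCausalPMF (revCausalCond p r) x y :=
  Finset.prod_pos fun i _ ↦ revCausalCond_self_pos hp hr h i

theorem revInfo_revCausalCond (hp : IsPMF p) (hr : IsCondPMF r) :
    revInfo p r (revCausalCond p r) = directedInfo p r := by
  refine (sub_eq_zero.1 ?_).symm
  rw [directedInfo_sub_revInfo hp.1 hr.1 fun x y ↦ revCausalPMF_revCausalCond_pos hp.1 hr.1,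
    div_eq_zero_iff]
  refine .inl <| Finset.sum_eq_zero fun x _ ↦ Finset.sum_eq_zero fun y _ ↦ ?_
  rcases (mul_nonneg (hp.1 x) (hr.1 x y)).eq_or_lt with hxy | hxy
  · simp [← hxy]
  · rw [causalCond_mul_revCausalPMF_revCausalCond hp hr hxy, div_self hxy.ne', Real.log_one,
      mul_zero]

end Info

section Compactness

variable {X Y : Type} [Fintype Y] {n : ℕ}

theorem IsPMF.nonempty {α : Type} [Fintype α] {p : α → ℝ} (hp : IsPMF p) : Nonempty α := by
  by_contra! hempty
  simpa using hp.2

theorem IsCondPMF.nonempty {r : (Fin n → X) → (Fin n → Y) → ℝ} (hr : IsCondPMF r)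
    (x : Fin n → X) : Nonempty (Fin n → Y) :=
  IsPMF.nonempty ⟨hr.1 x, hr.2 x⟩

theorem setOf_isCondPMF_eq_pi :
    {r : (Fin n → X) → (Fin n → Y) → ℝ | IsCondPMF r} =
      Set.univ.pi fun _ ↦ stdSimplex ℝ (Fin n → Y) := by
  ext r
  simp [IsCondPMF, stdSimplex, forall_and]

theorem isCompact_setOf_isCondPMF :
    IsCompact {r : (Fin n → X) → (Fin n → Y) → ℝ | IsCondPMF r} := by
  rw [setOf_isCondPMF_eq_pi]
  exact isCompact_univ_pi fun _ ↦ isCompact_stdSimplex ℝ _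

theorem convex_setOf_isCondPMF :
    Convex ℝ {r : (Fin n → X) → (Fin n → Y) → ℝ | IsCondPMF r} := by
  rw [setOf_isCondPMF_eq_pi]
  exact convex_pi fun _ _ ↦ convex_stdSimplex ℝ _

variable [Fintype X]

theorem isCompact_setOf_isRevCausalFamily :
    IsCompact {f : Fin n → (Fin n → X) → (Fin n → Y) → X → ℝ | IsRevCausalFamily f} := by
  refine isCompact_Icc.of_isClosed_subset ?_
    (fun f hf ↦ (⟨fun i x y ↦ (hf.1 i x y).1, hf.apply_le_one⟩ : f ∈ Set.Icc 0 1))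
  simp only [IsRevCausalFamily, Set.ofPred_and, Set.ofPred_forall]
  refine .inter (isClosed_iInter fun i ↦ isClosed_iInter fun x ↦ isClosed_iInter fun y ↦ .inter
    (isClosed_iInter fun a ↦ isClosed_le (by fun_prop) (by fun_prop))
    (isClosed_eq (by fun_prop) (by fun_prop))) ?_
  exact isClosed_iInter fun i ↦ isClosed_iInter fun x ↦ isClosed_iInter fun x' ↦
    isClosed_iInter fun y ↦ isClosed_iInter fun y' ↦ isClosed_iInter fun _ ↦
    isClosed_iInter fun _ ↦ isClosed_eq (by fun_prop) (by fun_prop)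

theorem convex_setOf_isRevCausalFamily :
    Convex ℝ {f : Fin n → (Fin n → X) → (Fin n → Y) → X → ℝ | IsRevCausalFamily f} := by
  intro f hf g hg a b ha hb hab
  refine ⟨fun i x y ↦ ?_, fun i x x' y y' hx hy ↦ ?_⟩
  · exact convex_stdSimplex ℝ X (hf.1 i x y) (hg.1 i x y) ha hb hab
  · simp only [Pi.add_apply, Pi.smul_apply, hf.2 i x x' y y' hx hy, hg.2 i x x' y y' hx hy]

end Compactness

section Duality

variable {X Y : Type} [Fintype X] [Fintype Y] {n : ℕ}

/-- The Lagrangian `E[log₂ (p′ / p)] + λ (E[d] - D)` at the conditional pmf `r` and the dual point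
`s = (f, λ)`, where `f` lists the factors of `p′`. -/
def lagrangian (p : (Fin n → X) → ℝ) (d : (Fin n → X) → (Fin n → Y) → ℝ) (D : ℝ)
    (r : (Fin n → X) → (Fin n → Y) → ℝ)
    (s : (Fin n → (Fin n → X) → (Fin n → Y) → X → ℝ) × ℝ) : ℝ :=
  revInfo p r s.1 + s.2 * (jointExp p r d - D)

/-- The dual points `(f, λ)` with `λ ≥ 0` and `f` a reverse causal family whose pmf is positive
where `p` is, so that the Lagrangian is free of logarithms of zero. -/
def dualDomain (p : (Fin n → X) → ℝ) :
    Set ((Fin n → (Fin n → X) → (Fin n → Y) → X → ℝ) × ℝ) :=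
  {s | IsRevCausalFamily s.1 ∧ (∀ x y, 0 < p x → ∀ i, 0 < s.1 i x y (x i)) ∧ 0 ≤ s.2}

/-- The largest value of `log₂ γ(x)` that satisfies the dual constraint
`p(x) γ(x) 2^{-λ d(x, y)} ≤ p′(x‖y)` at `y`. -/
def logGammaBound (p : (Fin n → X) → ℝ) (d : (Fin n → X) → (Fin n → Y) → ℝ)
    (s : (Fin n → (Fin n → X) → (Fin n → Y) → X → ℝ) × ℝ) (x : Fin n → X) (y : Fin n → Y) : ℝ :=
  Real.logb 2 (revCausalPMF s.1 x y) - Real.logb 2 (p x) + s.2 * d x y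

variable {p : (Fin n → X) → ℝ} {d : (Fin n → X) → (Fin n → Y) → ℝ} {D : ℝ}
  {r : (Fin n → X) → (Fin n → Y) → ℝ}
  {s : (Fin n → (Fin n → X) → (Fin n → Y) → X → ℝ) × ℝ}

theorem lagrangian_eq_jointExp_sub :
    lagrangian p d D r s = jointExp p r (logGammaBound p d s) - s.2 * D := by
  have combo := jointExp_combo_right p r
    (fun x y ↦ Real.logb 2 (revCausalPMF s.1 x y) - Real.logb 2 (p x)) d 1 s.2
  rw [one_smul, one_mul] at combo
  rw [show logGammaBound p d s = _ + s.2 • d from rfl, combo, lagrangian, revInfo]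
  ring

theorem revCausalPMF_pos_of_mem_dualDomain (hs : s ∈ dualDomain p) {x : Fin n → X}
    (hx : 0 < p x) (y : Fin n → Y) : 0 < revCausalPMF s.1 x y :=
  Finset.prod_pos fun i _ ↦ hs.2.1 x y hx i

theorem mem_dualDomain_of_revCausalPMF_pos (hf : IsRevCausalFamily s.1)
    (hpos : ∀ x y, 0 < p x → 0 < revCausalPMF s.1 x y) (hlam : 0 ≤ s.2) : s ∈ dualDomain p :=
  ⟨hf, fun x y hx i ↦ ((hf.1 i x y).1 _).lt_of_ne'
    (Finset.prod_ne_zero_iff.1 (hpos x y hx).ne' i (Finset.mem_univ i)), hlam⟩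

theorem convex_dualDomain (p : (Fin n → X) → ℝ) : Convex ℝ (dualDomain (Y := Y) p) := by
  intro s hs s' hs' a b ha hb hab
  refine ⟨convex_setOf_isRevCausalFamily hs.1 hs'.1 ha hb hab, fun x y hx i ↦ ?_, ?_⟩
  · exact convex_Ioi (𝕜 := ℝ) (0 : ℝ) (hs.2.1 x y hx i) (hs'.2.1 x y hx i) ha hb hab
  · exact convex_Ici (𝕜 := ℝ) (0 : ℝ) hs.2.2 hs'.2.2 ha hb hab

theorem continuous_lagrangian_left :
    Continuous fun r : (Fin n → X) → (Fin n → Y) → ℝ ↦ lagrangian p d D r s :=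
  (continuous_jointExp _ _).add
    (continuous_const.mul ((continuous_jointExp _ _).sub continuous_const))

theorem lagrangian_combo_left (r r' : (Fin n → X) → (Fin n → Y) → ℝ) {a b : ℝ}
    (hab : a + b = 1) :
    lagrangian p d D (a • r + b • r') s =
      a * lagrangian p d D r s + b * lagrangian p d D r' s := by
  simp only [lagrangian, revInfo, jointExp_combo_left]
  linear_combination (s.2 * D) * hab

theorem quasiconvexOn_lagrangian :
    QuasiconvexOn ℝ {r : (Fin n → X) → (Fin n → Y) → ℝ | IsCondPMF r}
      fun r ↦ lagrangian p d D r s :=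
  ConvexOn.quasiconvexOn ⟨convex_setOf_isCondPMF, fun r _ r' _ _ _ _ _ hab ↦
    (lagrangian_combo_left r r' hab).le⟩

theorem continuousOn_lagrangian_right (hp : ∀ x, 0 ≤ p x) :
    ContinuousOn (lagrangian p d D r) (dualDomain p) := by
  unfold lagrangian revInfo jointExp
  refine .add (continuousOn_finsetSum _ fun x _ ↦ continuousOn_finsetSum _ fun y _ ↦ ?_)
    (by fun_prop)
  rcases (hp x).eq_or_lt with hx | hx
  · simp only [← hx, zero_mul]
    exact continuousOn_const
  · have hcont : ContinuousOn (fun s ↦ Real.logb 2 (revCausalPMF s.1 x y)) (dualDomain p) := by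
      refine ContinuousOn.logb (by unfold revCausalPMF; fun_prop) fun s hs ↦ ?_
      exact (revCausalPMF_pos_of_mem_dualDomain hs hx y).ne'
    fun_prop

theorem concaveOn_lagrangian_right (hp : ∀ x, 0 ≤ p x) (hr : ∀ x y, 0 ≤ r x y) :
    ConcaveOn ℝ (dualDomain p) (lagrangian p d D r) := by
  refine ⟨convex_dualDomain p, fun s hs s' hs' a b ha hb hab ↦ ?_⟩
  have bound_concave (x y) (hx : 0 < p x) :
      (a • logGammaBound p d s + b • logGammaBound p d s') x y ≤
        logGammaBound p d (a • s + b • s') x y := by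
    have hlog := (concaveOn_logb_prod one_lt_two).2 (hs.2.1 x y hx) (hs'.2.1 x y hx) ha hb hab
    simp only [smul_eq_mul, Pi.add_apply, Pi.smul_apply] at hlog
    simp only [logGammaBound, revCausalPMF, Pi.add_apply, Pi.smul_apply, Prod.fst_add,
      Prod.smul_fst, Prod.snd_add, Prod.smul_snd, smul_eq_mul]
    linear_combination hlog - Real.logb 2 (p x) * hab
  have hmono := jointExp_mono hp hr bound_concave
  rw [jointExp_combo_right] at hmono
  simp only [lagrangian_eq_jointExp_sub, smul_eq_mul, Prod.snd_add, Prod.smul_snd]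
  linear_combination hmono

theorem le_logb_revCausalPMF_of_le_lagrangian (hp : ∀ x, 0 ≤ p x) (hr : IsCondPMF r)
    (hrD : jointExp p r d ≤ D) (hs : s ∈ dualDomain p) {t : ℝ} (ht : t ≤ lagrangian p d D r s)
    {x : Fin n → X} {y : Fin n → Y} (hxy : 0 < p x * r x y) :
    (t + ∑ x', p x' * Real.logb 2 (p x')) / (p x * r x y) ≤
      Real.logb 2 (revCausalPMF s.1 x y) := by
  have neg_logb_nonneg (x y) : 0 ≤ -Real.logb 2 (revCausalPMF s.1 x y) :=
    neg_nonneg.2 <| Real.logb_nonpos one_lt_two (hs.1.revCausalPMF_nonneg x y)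
      (hs.1.revCausalPMF_le_one x y)
  have ht_le : t ≤ revInfo p r s.1 :=
    ht.trans <| add_le_of_nonpos_right <|
      mul_nonpos_of_nonneg_of_nonpos hs.2.2 (sub_nonpos.2 hrD)
  have revInfo_eq : revInfo p r s.1 =
      -jointExp p r (fun x y ↦ -Real.logb 2 (revCausalPMF s.1 x y)) -
        ∑ x', p x' * Real.logb 2 (p x') := by
    rw [← jointExp_const_right hr.2 fun x ↦ Real.logb 2 (p x)]
    simp only [revInfo, jointExp, mul_sub, mul_neg, Finset.sum_sub_distrib, Finset.sum_neg_distrib,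
      neg_neg]
  rw [div_le_iff₀ hxy]
  linarith [apply_le_jointExp hp hr.1 neg_logb_nonneg x y]

/-- The set of values `-λD + ∑ x, p(x) log₂ γ(x)` of the dual problem, without the factor `1/n`. -/
def dualValues (p : (Fin n → X) → ℝ) (d : (Fin n → X) → (Fin n → Y) → ℝ) (D : ℝ) : Set ℝ :=
  {v | ∃ (lam : ℝ) (γ : (Fin n → X) → ℝ), 0 ≤ lam ∧ (∀ x, 0 < γ x) ∧
    (∃ f : Fin n → (Fin n → X) → (Fin n → Y) → X → ℝ, IsRevCausalFamily f ∧
      ∀ x y, p x * γ x * 2 ^ (-(lam * d x y)) ≤ ∏ i, f i x y (x i)) ∧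
    v = -(lam * D) + ∑ x, p x * Real.logb 2 (γ x)}

theorem image_const_mul_dualValues (c : ℝ) :
    (c * ·) '' dualValues p d D =
      {v | ∃ (lam : ℝ) (γ : (Fin n → X) → ℝ), 0 ≤ lam ∧ (∀ x, 0 < γ x) ∧
        (∃ f : Fin n → (Fin n → X) → (Fin n → Y) → X → ℝ, IsRevCausalFamily f ∧
          ∀ x y, p x * γ x * 2 ^ (-(lam * d x y)) ≤ ∏ i, f i x y (x i)) ∧
        v = c * (-(lam * D) + ∑ x, p x * Real.logb 2 (γ x))} := by
  refine Set.ext fun v ↦ ⟨?_, ?_⟩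
  · rintro ⟨_, ⟨lam, γ, hlam, hγ, hf, rfl⟩, rfl⟩
    exact ⟨lam, γ, hlam, hγ, hf, rfl⟩
  · rintro ⟨lam, γ, hlam, hγ, hf, rfl⟩
    exact ⟨_, ⟨lam, γ, hlam, hγ, hf, rfl⟩, rfl⟩

theorem exists_mem_dualValues_ge [Nonempty (Fin n → Y)] (hp : ∀ x, 0 ≤ p x)
    (hs : s ∈ dualDomain p) {R : ℝ} (hR : ∀ r, IsCondPMF r → R ≤ lagrangian p d D r s) :
    ∃ v ∈ dualValues p d D, R ≤ v := by
  classical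
  choose g hg using fun x ↦ Finite.exists_min (logGammaBound p d s x)
  let γ (x : Fin n → X) : ℝ := 2 ^ logGammaBound p d s x (g x)
  have logb_γ (x) : Real.logb 2 (γ x) = logGammaBound p d s x (g x) :=
    Real.logb_rpow two_pos (by norm_num)
  have hγ (x) : 0 < γ x := by positivity
  refine ⟨_, ⟨s.2, γ, hs.2.2, hγ, ⟨s.1, hs.1, fun x y ↦ ?_⟩, rfl⟩, ?_⟩
  · rcases (hp x).eq_or_lt with hx | hx
    · rw [← hx, zero_mul, zero_mul]
      exact hs.1.revCausalPMF_nonneg x y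
    · refine (mul_mul_rpow_neg_le_iff hx (hγ x)
        (revCausalPMF_pos_of_mem_dualDomain hs hx y)).2 ?_
      exact (logb_γ x).trans_le (hg x y)
  · have hdet : IsCondPMF fun (x : Fin n → X) (y : Fin n → Y) ↦ if y = g x then (1 : ℝ) else 0 :=
      ⟨fun x y ↦ ite_nonneg zero_le_one le_rfl, fun x ↦ by simp⟩
    calc R ≤ _ := hR _ hdet
      _ = _ := by
        rw [lagrangian_eq_jointExp_sub, jointExp_ite_eq]
        simp only [logb_γ]
        ring

theorem exists_pos_isCondPMF_jointExp_lt (hr : IsCondPMF r) (hrD : jointExp p r d < D) :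
    ∃ r' : (Fin n → X) → (Fin n → Y) → ℝ,
      IsCondPMF r' ∧ (∀ x y, 0 < r' x y) ∧ jointExp p r' d < D := by
  let u (_ : Fin n → X) (_ : Fin n → Y) : ℝ := (Fintype.card (Fin n → Y) : ℝ)⁻¹
  have hu : IsCondPMF u := by
    refine ⟨fun _ _ ↦ by positivity, fun x ↦ ?_⟩
    have : Nonempty (Fin n → Y) := hr.nonempty x
    rw [Finset.sum_const, Finset.card_univ, nsmul_eq_mul,
      mul_inv_cancel₀ (Nat.cast_ne_zero.2 Fintype.card_ne_zero)]
  obtain ⟨a, ⟨ha0, ha1⟩, ha⟩ := exists_convexCombo_lt hrD (jointExp p u d)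
  refine ⟨(1 - a) • r + a • u, ?_, fun x y ↦ ?_, ?_⟩
  · exact convex_setOf_isCondPMF hr hu (sub_nonneg.2 ha1.le) ha0.le (sub_add_cancel 1 a)
  · exact add_pos_of_nonneg_of_pos (mul_nonneg (sub_nonneg.2 ha1.le) (hr.1 x y))
      (mul_pos ha0 (inv_pos.2 (Nat.cast_pos.2 (Fintype.card_pos_iff.2 ⟨y⟩))))
  · rwa [jointExp_combo_left]

section Bounds

variable [DecidableEq X] [DecidableEq Y]

theorem revCausalCond_mem_dualDomain (hp : ∀ x, 0 ≤ p x) (hr : ∀ x y, 0 < r x y) {lam : ℝ}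
    (hlam : 0 ≤ lam) : (revCausalCond p r, lam) ∈ dualDomain p :=
  ⟨isRevCausalFamily_revCausalCond hp fun x y ↦ (hr x y).le,
    fun x y hx ↦ revCausalCond_self_pos hp (fun x y ↦ (hr x y).le) (mul_pos hx (hr x y)), hlam⟩

theorem revInfo_le_directedInfo_of_mem_dualDomain (hp : IsPMF p) (hr : IsCondPMF r)
    (hs : s ∈ dualDomain p) : revInfo p r s.1 ≤ directedInfo p r :=
  revInfo_le_directedInfo hp hr hs.1 fun x y hxy ↦
    revCausalPMF_pos_of_mem_dualDomain hs (pos_of_mul_pos_left hxy (hr.1 x y)) y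

theorem lagrangian_le_directedInfo (hp : IsPMF p) (hr : IsCondPMF r) (hrD : jointExp p r d ≤ D)
    (hs : s ∈ dualDomain p) : lagrangian p d D r s ≤ directedInfo p r :=
  (add_le_of_nonpos_right <| mul_nonpos_of_nonneg_of_nonpos hs.2.2 (sub_nonpos.2 hrD)).trans
    (revInfo_le_directedInfo_of_mem_dualDomain hp hr hs)

theorem le_directedInfo_of_mem_dualValues (hp : IsPMF p) {v : ℝ} (hv : v ∈ dualValues p d D)
    (hr : IsCondPMF r) (hrD : jointExp p r d ≤ D) : v ≤ directedInfo p r := by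
  obtain ⟨lam, γ, hlam, hγ, ⟨f, hf, hle⟩, rfl⟩ := hv
  have hpos (x y) (hx : 0 < p x) : 0 < revCausalPMF f x y :=
    (mul_pos (mul_pos hx (hγ x)) (by positivity)).trans_le (hle x y)
  have hs : (f, lam) ∈ dualDomain p := mem_dualDomain_of_revCausalPMF_pos hf hpos hlam
  have logb_le (x y) (hx : 0 < p x) : Real.logb 2 (γ x) ≤ logGammaBound p d (f, lam) x y :=
    (mul_mul_rpow_neg_le_iff hx (hγ x) (hpos x y hx)).1 (hle x y)
  calc -(lam * D) + ∑ x, p x * Real.logb 2 (γ x)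
      = jointExp p r (fun x _ ↦ Real.logb 2 (γ x)) - lam * D := by
        rw [jointExp_const_right hr.2]
        ring
    _ ≤ jointExp p r (logGammaBound p d (f, lam)) - lam * D :=
        sub_le_sub_right (jointExp_mono hp.1 hr.1 logb_le) _
    _ = lagrangian p d D r (f, lam) := lagrangian_eq_jointExp_sub.symm
    _ ≤ directedInfo p r := lagrangian_le_directedInfo hp hr hrD hs

theorem snd_le_of_le_lagrangian (hp : IsPMF p) (hr : IsCondPMF r) (hrD : jointExp p r d < D)
    (hs : s ∈ dualDomain p) {t : ℝ} (ht : t ≤ lagrangian p d D r s) :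
    s.2 ≤ (directedInfo p r - t) / (D - jointExp p r d) := by
  rw [le_div_iff₀ (sub_pos.2 hrD)]
  unfold lagrangian at ht
  linarith [revInfo_le_directedInfo_of_mem_dualDomain hp hr hs]

end Bounds

theorem exists_isCompact_subset_dualDomain (hp : IsPMF p) (hr : IsCondPMF r)
    (hrpos : ∀ x y, 0 < r x y) (hrD : jointExp p r d < D) (t : ℝ) :
    ∃ C ⊆ dualDomain p, IsCompact C ∧ ∀ s ∈ dualDomain p, t ≤ lagrangian p d D r s → s ∈ C := by
  classical
  let Λ : ℝ := (directedInfo p r - t) / (D - jointExp p r d)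
  let c (x : Fin n → X) (y : Fin n → Y) : ℝ :=
    2 ^ ((t + ∑ x', p x' * Real.logb 2 (p x')) / (p x * r x y))
  let C : Set ((Fin n → (Fin n → X) → (Fin n → Y) → X → ℝ) × ℝ) :=
    ({f | IsRevCausalFamily f} ×ˢ Set.Icc 0 Λ) ∩
      {s | ∀ x y, 0 < p x → c x y ≤ revCausalPMF s.1 x y}
  refine ⟨C, fun s hs ↦ ?_, ?_, fun s hs ht ↦ ⟨⟨hs.1, hs.2.2, ?_⟩, fun x y hx ↦ ?_⟩⟩
  · exact mem_dualDomain_of_revCausalPMF_pos hs.1.1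
      (fun x y hx ↦ (by positivity : 0 < c x y).trans_le (hs.2 x y hx)) hs.1.2.1
  · refine (isCompact_setOf_isRevCausalFamily.prod isCompact_Icc).inter_right ?_
    simp only [Set.ofPred_forall]
    exact isClosed_iInter fun x ↦ isClosed_iInter fun y ↦ isClosed_iInter fun _ ↦
      isClosed_le continuous_const (by unfold revCausalPMF; fun_prop)
  · exact snd_le_of_le_lagrangian hp hr hrD hs ht
  · rw [← Real.le_logb_iff_rpow_le one_lt_two (revCausalPMF_pos_of_mem_dualDomain hs hx y)]
    exact le_logb_revCausalPMF_of_le_lagrangian hp.1 hr hrD.le hs ht (mul_pos hx (hrpos x y))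

variable [DecidableEq X] [DecidableEq Y]

-- The feasible `r` itself may make `revCausalCond p r` vanish where `p` does not; mixing `r` with a
-- small amount of the positive `r₀` avoids this at little cost, as `revInfo` is affine in `r`.
theorem exists_lt_revInfo_of_le_directedInfo (hp : IsPMF p) {r₀ : (Fin n → X) → (Fin n → Y) → ℝ}
    (hr₀ : IsCondPMF r₀) (hr₀pos : ∀ x y, 0 < r₀ x y) (hr₀D : jointExp p r₀ d ≤ D) {R t : ℝ}
    (hR : ∀ r, IsCondPMF r → jointExp p r d ≤ D → R ≤ directedInfo p r) (ht : t < R)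
    (hr : IsCondPMF r) (hrD : jointExp p r d ≤ D) :
    ∃ f, (f, (0 : ℝ)) ∈ dualDomain p ∧ t < revInfo p r f := by
  obtain ⟨a, ⟨ha0, ha1⟩, ha⟩ := exists_convexCombo_lt ht (directedInfo p r₀)
  have ha1' : 0 < 1 - a := sub_pos.2 ha1
  let ra := (1 - a) • r + a • r₀
  have hra : IsCondPMF ra := convex_setOf_isCondPMF hr hr₀ ha1'.le ha0.le (sub_add_cancel 1 a)
  have hrapos (x y) : 0 < ra x y :=
    add_pos_of_nonneg_of_pos (mul_nonneg ha1'.le (hr.1 x y)) (mul_pos ha0 (hr₀pos x y))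
  have hraD : jointExp p ra d ≤ D := by
    rw [jointExp_combo_left]
    exact convex_Iic (𝕜 := ℝ) D hrD hr₀D ha1'.le ha0.le (sub_add_cancel 1 a)
  have hmem : (revCausalCond p ra, (0 : ℝ)) ∈ dualDomain p :=
    revCausalCond_mem_dualDomain hp.1 hrapos le_rfl
  refine ⟨revCausalCond p ra, hmem, lt_of_mul_lt_mul_left ?_ ha1'.le⟩
  have R_le : R ≤ (1 - a) * revInfo p r (revCausalCond p ra) + a * directedInfo p r₀ := by
    calc R ≤ directedInfo p ra := hR ra hra hraD
      _ = (1 - a) * revInfo p r (revCausalCond p ra) + a * revInfo p r₀ (revCausalCond p ra) := by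
        rw [← revInfo_revCausalCond hp hra]
        exact jointExp_combo_left p r r₀ _ _ _
      _ ≤ _ := add_le_add_right (mul_le_mul_of_nonneg_left
          (revInfo_le_directedInfo_of_mem_dualDomain hp hr₀ hmem) ha0.le) _
  linarith

theorem exists_lt_lagrangian (hp : IsPMF p) {r₀ : (Fin n → X) → (Fin n → Y) → ℝ}
    (hr₀ : IsCondPMF r₀) (hr₀pos : ∀ x y, 0 < r₀ x y) (hr₀D : jointExp p r₀ d ≤ D) {R t : ℝ}
    (hR : ∀ r, IsCondPMF r → jointExp p r d ≤ D → R ≤ directedInfo p r) (ht : t < R)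
    (hr : IsCondPMF r) : ∃ s ∈ dualDomain p, t < lagrangian p d D r s := by
  rcases le_or_gt (jointExp p r d) D with hrD | hrD
  · obtain ⟨f, hf, hlt⟩ :=
      exists_lt_revInfo_of_le_directedInfo hp hr₀ hr₀pos hr₀D hR ht hr hrD
    exact ⟨(f, 0), hf, by simpa [lagrangian] using hlt⟩
  · have hlim : Tendsto (fun lam ↦ lagrangian p d D r (revCausalCond p r₀, lam)) atTop atTop :=
      tendsto_atTop_add_const_left _ (revInfo p r (revCausalCond p r₀))
        (tendsto_id.atTop_mul_const (sub_pos.2 hrD))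
    obtain ⟨lam, hlam, hlt⟩ := ((eventually_ge_atTop 0).and (hlim.eventually_gt_atTop t)).exists
    exact ⟨_, revCausalCond_mem_dualDomain hp.1 hr₀pos hlam, hlt⟩

theorem exists_forall_le_lagrangian (hp : IsPMF p) {r₀ : (Fin n → X) → (Fin n → Y) → ℝ}
    (hr₀ : IsCondPMF r₀) (hr₀pos : ∀ x y, 0 < r₀ x y) (hr₀D : jointExp p r₀ d < D) {R : ℝ}
    (hR : ∀ r, IsCondPMF r → jointExp p r d ≤ D → R ≤ directedInfo p r) :
    ∃ s ∈ dualDomain p, ∀ r, IsCondPMF r → R ≤ lagrangian p d D r s := by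
  have approx (t) (ht : t < R) :
      ∃ s ∈ dualDomain p, ∀ r ∈ {r | IsCondPMF r}, t < lagrangian p d D r s :=
    exists_forall_lt_of_forall_exists_lt ⟨r₀, hr₀⟩ convex_setOf_isCondPMF
      isCompact_setOf_isCondPMF (convex_dualDomain p)
      (fun s _ ↦ continuous_lagrangian_left.lowerSemicontinuous.lowerSemicontinuousOn _)
      (fun s _ ↦ quasiconvexOn_lagrangian)
      (fun r _ ↦ (continuousOn_lagrangian_right hp.1).upperSemicontinuousOn)
      (fun r hr ↦ (concaveOn_lagrangian_right hp.1 hr.1).quasiconcaveOn)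
      fun r hr ↦ exists_lt_lagrangian hp hr₀ hr₀pos hr₀D.le hR ht hr
  obtain ⟨C, hCsub, hC, hmemC⟩ :=
    exists_isCompact_subset_dualDomain hp hr₀ hr₀pos hr₀D (R - 1)
  obtain ⟨s, hsC, hs⟩ := exists_forall_le_of_forall_lt hC
    (Φ := fun r : {r // IsCondPMF r} ↦ lagrangian p d D r.1) (R := R)
    (fun r ↦ ((continuousOn_lagrangian_right hp.1).mono hCsub).upperSemicontinuousOn)
    fun t ht ↦ by
      obtain ⟨s, hs, hlt⟩ := approx (max t (R - 1)) (max_lt ht (sub_one_lt R))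
      exact ⟨s, hmemC s hs ((le_max_right _ _).trans (hlt r₀ hr₀).le),
        fun r ↦ (le_max_left _ _).trans (hlt r.1 r.2).le⟩
  exact ⟨s, hCsub hsC, fun r hr ↦ hs ⟨r, hr⟩⟩

/-- The set of directed informations of the conditional pmfs that meet the distortion constraint. -/
def feasibleInfos (p : (Fin n → X) → ℝ) (d : (Fin n → X) → (Fin n → Y) → ℝ) (D : ℝ) : Set ℝ :=
  {v | ∃ r : (Fin n → X) → (Fin n → Y) → ℝ, IsCondPMF r ∧ jointExp p r d ≤ D ∧
    v = directedInfo p r}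

theorem bddBelow_feasibleInfos (hp : IsPMF p) (hs : s ∈ dualDomain p) :
    BddBelow (feasibleInfos p d D) := by
  obtain ⟨m, hm⟩ := isCompact_setOf_isCondPMF.bddBelow_image
    (continuous_jointExp p fun x y ↦
      Real.logb 2 (revCausalPMF s.1 x y) - Real.logb 2 (p x)).continuousOn
  refine ⟨m, ?_⟩
  rintro _ ⟨r, hr, -, rfl⟩
  exact (hm ⟨r, hr, rfl⟩).trans (revInfo_le_directedInfo_of_mem_dualDomain hp hr hs)

theorem isGreatest_dualValues (hp : IsPMF p)
    (hfeas : ∃ r : (Fin n → X) → (Fin n → Y) → ℝ, IsCondPMF r ∧ jointExp p r d < D) :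
    IsGreatest (dualValues p d D) (sInf (feasibleInfos p d D)) := by
  obtain ⟨r, hr, hrD⟩ := hfeas
  obtain ⟨r₀, hr₀, hr₀pos, hr₀D⟩ := exists_pos_isCondPMF_jointExp_lt hr hrD
  have hbdd : BddBelow (feasibleInfos p d D) :=
    bddBelow_feasibleInfos hp (revCausalCond_mem_dualDomain hp.1 hr₀pos le_rfl)
  have : Nonempty (Fin n → Y) := hp.nonempty.elim hr.nonempty
  have upper : sInf (feasibleInfos p d D) ∈ upperBounds (dualValues p d D) := fun v hv ↦
    le_csInf ⟨_, r, hr, hrD.le, rfl⟩ <| by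
      rintro _ ⟨r', hr', hr'D, rfl⟩
      exact le_directedInfo_of_mem_dualValues hp hv hr' hr'D
  obtain ⟨s, hs, hle⟩ := exists_forall_le_lagrangian hp hr₀ hr₀pos hr₀D
    fun r' hr' hr'D ↦ csInf_le hbdd ⟨r', hr', hr'D, rfl⟩
  obtain ⟨v, hv, hle_v⟩ := exists_mem_dualValues_ge hp.1 hs hle
  exact ⟨hle_v.antisymm (upper hv) ▸ hv, upper⟩

end Duality

end FFRD

open FFRD in
theorem Rn_eq_max_dual_general
    {X Y : Type} [Fintype X] [DecidableEq X] [Fintype Y] [DecidableEq Y]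
    (n : ℕ) (hn : 1 ≤ n)
    (p : (Fin n → X) → ℝ) (hp : IsPMF p)
    (d : (Fin n → X) → (Fin n → Y) → ℝ) (D : ℝ)
    (hfeas : ∃ r : (Fin n → X) → (Fin n → Y) → ℝ, IsCondPMF r ∧
      (∑ x, ∑ y, p x * r x y * d x y) < D) :
    IsGreatest
      {v : ℝ | ∃ (lam : ℝ) (γ : (Fin n → X) → ℝ),
        0 ≤ lam ∧ (∀ x, 0 < γ x) ∧
        (∃ f : Fin n → (Fin n → X) → (Fin n → Y) → X → ℝ, IsRevCausalFamily f ∧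
          ∀ x y, p x * γ x * 2 ^ (-(lam * d x y)) ≤ ∏ i, f i x y (x i)) ∧
        v = (1 / (n : ℝ)) * (-(lam * D) + ∑ x, p x * Real.logb 2 (γ x))}
      (Rn n p d D) := by
  have hn_inv : 0 < 1 / (n : ℝ) := one_div_pos.2 (Nat.cast_pos.2 hn)
  have himage : IsGreatest ((1 / (n : ℝ) * ·) '' dualValues p d D) (Rn n p d D) :=
    (monotone_mul_left_of_nonneg hn_inv.le).map_isGreatest (isGreatest_dualValues hp hfeas)
  rwa [image_const_mul_dualValues] at himage

open FFRD in
/-- Theorem 6, dual form: `Rₙ(D)` equals the maximum over `λ ≥ 0` and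
`γ > 0` for which some reverse causal conditioning pmf `p′` satisfies
`p(xⁿ)γ(xⁿ)2^{−λd(xⁿ,x̂ⁿ)} ≤ p′(xⁿ‖x̂ⁿ)`, of `(1/n)(−λD + Σ p log₂ γ)`. -/
theorem Rn_eq_max_dual
    {X Y : Type} [Fintype X] [DecidableEq X] [Fintype Y] [DecidableEq Y]
    (n : ℕ) (hn : 1 ≤ n)
    (p : (Fin n → X) → ℝ) (hp : IsPMF p) (hppos : ∀ x, 0 < p x)
    (d : (Fin n → X) → (Fin n → Y) → ℝ) (hd : ∀ x y, 0 ≤ d x y)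
    (D : ℝ) (hD : 0 < D)
    (hfeas : ∃ r : (Fin n → X) → (Fin n → Y) → ℝ, IsCondPMF r ∧
      (∑ x, ∑ y, p x * r x y * d x y) < D) :
    IsGreatest
      {v : ℝ | ∃ (lam : ℝ) (γ : (Fin n → X) → ℝ),
        0 ≤ lam ∧ (∀ x, 0 < γ x) ∧
        (∃ f : Fin n → (Fin n → X) → (Fin n → Y) → X → ℝ, IsRevCausalFamily f ∧
          ∀ x y, p x * γ x * 2 ^ (-(lam * d x y)) ≤ ∏ i, f i x y (x i)) ∧
        v = (1 / (n : ℝ)) * (-(lam * D) + ∑ x, p x * Real.logb 2 (γ x))}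
      (Rn n p d D) :=
  Rn_eq_max_dual_general n hn p hp d D hfeas
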